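/- arXiv:2010.15073 — 2 statements merged into one kernel-verified Lean document; each statement's English description precedes it below -/
import Mathlib

section
/- Let x, s be real numbers with 0 < x < 1 and 1/2 < s < 1. Then (1 − s·x)·log₂((1 − s·x)/(1 − x)) + s·x·log₂ s ≥ (1 − s)²·x·(1 − x)/(2·(1 − s·x)). -/
/-!
In natural logarithms the right-hand side is the Kullback–Leibler divergence of `Bernoulli (s * x)`
from `Bernoulli x`, which splits as `x * klFun s + (1 - x) * klFun ((1 - s * x) / (1 - x))` with
`klFun t = t * log t + 1 - t`. The second summand is nonnegative, and `sinh u ≤ u` at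
`u = log s ≤ 0` gives `(1 - s) ^ 2 / 2 ≤ klFun s`. Hence `(1 - s) ^ 2 * x / 2` is already a lower
bound; passing to a base in `(1, e]` only enlarges the divergence, and the factor
`(1 - x) / (1 - s * x)` is at most `1`.
-/

open Real InformationTheory

theorem half_sub_inv_le_log {s : ℝ} (hs0 : 0 < s) (hs1 : s ≤ 1) : (s - s⁻¹) / 2 ≤ log s := by
  rw [← sinh_log hs0]
  exact sinh_le_self_iff.2 (log_nonpos hs0.le hs1)

theorem one_sub_sq_div_two_le_klFun {s : ℝ} (hs0 : 0 ≤ s) (hs1 : s ≤ 1) :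
    (1 - s) ^ 2 / 2 ≤ klFun s := by
  obtain rfl | hs := hs0.eq_or_lt
  · norm_num [klFun_zero]
  calc (1 - s) ^ 2 / 2 = s * ((s - s⁻¹) / 2) + 1 - s := by field_simp; ring
    _ ≤ s * log s + 1 - s := by gcongr; exact half_sub_inv_le_log hs hs1
    _ = klFun s := rfl

theorem bernoulli_kl_eq_klFun_add_klFun {x : ℝ} (s : ℝ) (hx : x ≠ 1) :
    (1 - s * x) * log ((1 - s * x) / (1 - x)) + s * x * log s =
      x * klFun s + (1 - x) * klFun ((1 - s * x) / (1 - x)) := by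
  have hx' : 1 - x ≠ 0 := sub_ne_zero.2 hx.symm
  simp only [klFun]
  field_simp
  ring

theorem one_sub_sq_mul_div_two_le_bernoulli_kl {x s : ℝ} (hx0 : 0 ≤ x) (hx1 : x < 1)
    (hs0 : 0 ≤ s) (hs1 : s ≤ 1) :
    (1 - s) ^ 2 * x / 2 ≤ (1 - s * x) * log ((1 - s * x) / (1 - x)) + s * x * log s := by
  have hx : 0 < 1 - x := sub_pos.2 hx1
  have hsx : 0 ≤ 1 - s * x := sub_nonneg.2 (mul_le_one₀ hs1 hx0 hx1.le)
  rw [bernoulli_kl_eq_klFun_add_klFun s hx1.ne]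
  calc (1 - s) ^ 2 * x / 2 = x * ((1 - s) ^ 2 / 2) := by ring
    _ ≤ x * klFun s := by gcongr; exact one_sub_sq_div_two_le_klFun hs0 hs1
    _ ≤ x * klFun s + (1 - x) * klFun ((1 - s * x) / (1 - x)) :=
      le_add_of_nonneg_right (mul_nonneg hx.le (klFun_nonneg (by positivity)))

theorem stmt_14_general {x s b : ℝ} (hx0 : 0 ≤ x) (hx1 : x < 1) (hs0 : 0 ≤ s) (hs1 : s ≤ 1)
    (hb1 : 1 < b) (hb : b ≤ exp 1) :
    (1 - s) ^ 2 * x * (1 - x) / (2 * (1 - s * x)) ≤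
      (1 - s * x) * logb b ((1 - s * x) / (1 - x)) + s * x * logb b s := by
  have hsx : 1 - x ≤ 1 - s * x := sub_le_sub_left (mul_le_of_le_one_left hx0 hs1) 1
  have hratio : (1 - x) / (1 - s * x) ≤ 1 := div_le_one_of_le₀ hsx (by linarith)
  have hlog0 : 0 < log b := log_pos hb1
  have hlog1 : log b ≤ 1 := (log_le_iff_le_exp (by linarith)).2 hb
  calc (1 - s) ^ 2 * x * (1 - x) / (2 * (1 - s * x))
      = (1 - s) ^ 2 * x / 2 * ((1 - x) / (1 - s * x)) := mul_div_mul_comm ..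
    _ ≤ (1 - s) ^ 2 * x / 2 := mul_le_of_le_one_right (by positivity) hratio
    _ ≤ (1 - s) ^ 2 * x / 2 / log b := le_div_self (by positivity) hlog0 hlog1
    _ ≤ ((1 - s * x) * log ((1 - s * x) / (1 - x)) + s * x * log s) / log b := by
      gcongr
      exact one_sub_sq_mul_div_two_le_bernoulli_kl hx0 hx1 hs0 hs1
    _ = (1 - s * x) * logb b ((1 - s * x) / (1 - x)) + s * x * logb b s := by
      simp only [logb]
      ring

/-- For `0 < x < 1` and `1/2 < s < 1`:
`(1 − s·x)·log₂((1 − s·x)/(1 − x)) + s·x·log₂ s ≥ (1 − s)²·x·(1 − x)/(2·(1 − s·x))`. -/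
theorem stmt_14 (x s : ℝ) (hx0 : 0 < x) (hx1 : x < 1) (hs0 : 1 / 2 < s) (hs1 : s < 1) :
    (1 - s) ^ 2 * x * (1 - x) / (2 * (1 - s * x)) ≤
      (1 - s * x) * Real.logb 2 ((1 - s * x) / (1 - x)) + s * x * Real.logb 2 s :=
  stmt_14_general hx0.le hx1 (by linarith) hs1.le one_lt_two (by linarith [add_one_le_exp 1])
end

section
/- Let x, b be real numbers with 0 < x < 1, 1 < b < 2 and b·x < 1. Then b·x·log₂ b + (1 − b·x)·log₂((1 − b·x)/(1 − x)) ≥ (b − 1)²·x·(1 − b·x)/(2·(1 − x)). -/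
/-!
Multiplied by `log 2`, the sum of logarithms is the relative entropy of the Bernoulli distribution
with parameter `b * x` with respect to the one with parameter `x`. It equals
`x * klFun b + (1 - x) * klFun ((1 - b * x) / (1 - x))`, where `klFun t = t * log t + 1 - t` is
nonnegative, so it is at least `x * klFun b`. Bernstein's bound
`3 * (t - 1) ^ 2 / (2 * (t + 2)) ≤ klFun t` then suffices: for `t ≤ 2` the coefficient
`3 / (2 * (t + 2))` is at least `3 / 8`, which exceeds `log 2 / 2`.
-/

open InformationTheory Set

section Bernstein

variable {t : ℝ}

/-- The rational minorant `u² / (2 + 2u/3)`, `u = t - 1`, of `(1 + u) log (1 + u) - u` by which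
Bernstein's inequality is deduced from Bennett's. It agrees with `klFun` at `1` to third order. -/
noncomputable def bernsteinFun (t : ℝ) : ℝ := 3 * (t - 1) ^ 2 / (2 * (t + 2))

lemma continuousOn_bernsteinFun : ContinuousOn bernsteinFun (Ici 0) := by
  refine ContinuousOn.div (by fun_prop) (by fun_prop) ?_
  intro t (ht : 0 ≤ t)
  positivity

lemma hasDerivAt_bernsteinFun (ht : t + 2 ≠ 0) :
    HasDerivAt bernsteinFun (3 / 2 * (1 - 9 / (t + 2) ^ 2)) t := by
  have hnum : HasDerivAt (fun s : ℝ ↦ 3 * (s - 1) ^ 2) (6 * (t - 1)) t := by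
    convert! (((hasDerivAt_id t).sub_const 1).fun_pow 2).const_mul 3 using 1
    simp only [id]
    ring
  have hden : HasDerivAt (fun s : ℝ ↦ 2 * (s + 2)) 2 t := by
    simpa using ((hasDerivAt_id t).add_const 2).const_mul 2
  convert! hnum.div hden (mul_ne_zero two_ne_zero ht) using 1
  field

lemma hasDerivAt_deriv_bernsteinFun (ht : t + 2 ≠ 0) :
    HasDerivAt (fun s : ℝ ↦ 3 / 2 * (1 - 9 / (s + 2) ^ 2)) (27 / (t + 2) ^ 3) t := by
  have hsq : HasDerivAt (fun s : ℝ ↦ (s + 2) ^ 2) (2 * (t + 2)) t := by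
    simpa using ((hasDerivAt_id t).add_const 2).fun_pow 2
  have hdiv := (hasDerivAt_const t (9 : ℝ)).div hsq (pow_ne_zero 2 ht)
  convert! (hdiv.const_sub 1).const_mul (3 / 2) using 1
  field

lemma convexOn_klFun_sub_bernsteinFun : ConvexOn ℝ (Ici 0) (klFun - bernsteinFun) := by
  refine convexOn_of_hasDerivWithinAt2_nonneg (convex_Ici 0)
    (f' := fun t ↦ Real.log t - 3 / 2 * (1 - 9 / (t + 2) ^ 2))
    (f'' := fun t ↦ t⁻¹ - 27 / (t + 2) ^ 3)
    (continuous_klFun.continuousOn.sub continuousOn_bernsteinFun) ?_ ?_ ?_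
  all_goals
    rw [interior_Ici]
    intro t (ht : 0 < t)
    have ht2 : t + 2 ≠ 0 := by positivity
  · exact ((hasDerivAt_klFun ht.ne').sub (hasDerivAt_bernsteinFun ht2)).hasDerivWithinAt
  · exact ((Real.hasDerivAt_log ht.ne').sub (hasDerivAt_deriv_bernsteinFun ht2)).hasDerivWithinAt
  · -- AM-GM for `t, 1, 1`
    have amgm : 27 * t ≤ (t + 2) ^ 3 := by
      have : 0 ≤ (t - 1) ^ 2 * (t + 8) := by positivity
      linarith
    rw [sub_nonneg, inv_eq_one_div, div_le_div_iff₀ (by positivity) ht]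
    linarith

lemma bernsteinFun_le_klFun (ht : 0 ≤ t) : bernsteinFun t ≤ klFun t := by
  have hderiv : HasDerivAt (klFun - bernsteinFun) 0 1 := by
    convert! (hasDerivAt_klFun one_ne_zero).sub (hasDerivAt_bernsteinFun (by norm_num)) using 1
    norm_num
  have hmin : IsMinOn (klFun - bernsteinFun) (Ici 0) 1 :=
    convexOn_klFun_sub_bernsteinFun.isMinOn_of_rightDeriv_eq_zero (by simp)
      (hderiv.hasDerivWithinAt.derivWithin (uniqueDiffWithinAt_Ioi 1))
  simpa [klFun_one, bernsteinFun] using hmin (mem_Ici.2 ht)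

lemma log_two_div_two_mul_sq_le_klFun (ht : 0 ≤ t) (ht2 : t ≤ 2) :
    Real.log 2 / 2 * (t - 1) ^ 2 ≤ klFun t := by
  have hcoeff : Real.log 2 / 2 ≤ 3 / (2 * (t + 2)) := by
    rw [le_div_iff₀ (by positivity)]
    calc Real.log 2 / 2 * (2 * (t + 2)) = Real.log 2 * (t + 2) := by ring
      _ ≤ 0.75 * (2 + 2) := by
          gcongr
          linarith [Real.log_two_lt_d9]
      _ = 3 := by norm_num
  calc Real.log 2 / 2 * (t - 1) ^ 2
      ≤ 3 / (2 * (t + 2)) * (t - 1) ^ 2 := by gcongr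
    _ = bernsteinFun t := by rw [bernsteinFun, div_mul_eq_mul_div]
    _ ≤ klFun t := bernsteinFun_le_klFun ht

end Bernstein

section BernoulliRelativeEntropy

variable {x b : ℝ}

lemma bernoulli_relEntropy_eq_klFun (hx : x ≠ 1) :
    b * x * Real.log b + (1 - b * x) * Real.log ((1 - b * x) / (1 - x)) =
      x * klFun b + (1 - x) * klFun ((1 - b * x) / (1 - x)) := by
  have hx' : 1 - x ≠ 0 := sub_ne_zero.2 hx.symm
  simp only [klFun_apply]
  field

lemma mul_klFun_le_bernoulli_relEntropy (hx : x < 1) (hbx : b * x ≤ 1) :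
    x * klFun b ≤ b * x * Real.log b + (1 - b * x) * Real.log ((1 - b * x) / (1 - x)) := by
  rw [bernoulli_relEntropy_eq_klFun hx.ne, le_add_iff_nonneg_right]
  have hx' : 0 ≤ 1 - x := sub_nonneg.2 hx.le
  exact mul_nonneg hx' (klFun_nonneg (div_nonneg (sub_nonneg.2 hbx) hx'))

end BernoulliRelativeEntropy

/-- For `0 < x < 1`, `1 < b < 2` and `b·x < 1`:
`b·x·log₂ b + (1 − b·x)·log₂((1 − b·x)/(1 − x)) ≥ (b − 1)²·x·(1 − b·x)/(2·(1 − x))`. -/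
theorem stmt_15 (x b : ℝ) (hx0 : 0 < x) (hx1 : x < 1) (hb1 : 1 < b) (hb2 : b < 2)
    (hbx : b * x < 1) :
    (b - 1) ^ 2 * x * (1 - b * x) / (2 * (1 - x)) ≤
      b * x * Real.logb 2 b + (1 - b * x) * Real.logb 2 ((1 - b * x) / (1 - x)) := by
  have hratio : (1 - b * x) / (1 - x) ≤ 1 := by
    rw [div_le_one (sub_pos.2 hx1)]
    linarith [le_mul_of_one_le_left hx0.le hb1.le]
  calc (b - 1) ^ 2 * x * (1 - b * x) / (2 * (1 - x))
      = (b - 1) ^ 2 * x / 2 * ((1 - b * x) / (1 - x)) := by rw [mul_div_mul_comm]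
    _ ≤ (b - 1) ^ 2 * x / 2 := mul_le_of_le_one_right (by positivity) hratio
    _ = x * (Real.log 2 / 2 * (b - 1) ^ 2) / Real.log 2 := by field
    _ ≤ x * klFun b / Real.log 2 := by
        gcongr
        exact log_two_div_two_mul_sq_le_klFun (by linarith) hb2.le
    _ ≤ (b * x * Real.log b + (1 - b * x) * Real.log ((1 - b * x) / (1 - x))) / Real.log 2 := by
        gcongr
        exact mul_klFun_le_bernoulli_relEntropy hx1 hbx.le
    _ = b * x * Real.logb 2 b + (1 - b * x) * Real.logb 2 ((1 - b * x) / (1 - x)) := by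
        simp only [Real.logb]
        ring
end
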